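/- arXiv:1309.5701 — 5 statements merged into one kernel-verified Lean document; each statement's English description precedes it below -/
import Mathlib

section
/- Let G be an invertible real r×r matrix with columns g_1, …, g_r. Then for every real symmetric positive definite r×r matrix L satisfying g_jᵀ L g_j ≤ 1 for all j = 1, …, r, one has det L ≤ det (GGᵀ)⁻¹. Consequently, (GGᵀ)⁻¹ is an optimal solution of the origin-centered MVEE problem Q(S) for any finite symmetric point set S containing ±g_1, …, ±g_r whose other points p all satisfy pᵀ (GGᵀ)⁻¹ p ≤ 1. -/
open Matrix

noncomputable def euclNorm {n : ℕ} (v : Fin n → ℝ) : ℝ := Real.sqrt (∑ i, v i ^ 2)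

noncomputable def oneNorm {n : ℕ} (v : Fin n → ℝ) : ℝ := ∑ i, |v i|

noncomputable def specNorm {d m : ℕ} (M : Matrix (Fin d) (Fin m) ℝ) : ℝ :=
  ‖LinearMap.toContinuousLinearMap (Matrix.toEuclideanLin M)‖

noncomputable def sigmaMin {d r : ℕ} (M : Matrix (Fin d) (Fin r) ℝ) : ℝ :=
  sInf ((fun x => euclNorm (M *ᵥ x)) '' {x : Fin r → ℝ | euclNorm x = 1})

/-! Write `M = Gᴴ L G`. Its diagonal entries are the values of the quadratic form of `L` at the
columns of `G`, so feasibility of `L` says that the diagonal of `M` is at most `1`. The eigenvalues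
`λᵢ ≥ 0` of `M` satisfy `λᵢ ≤ exp (λᵢ - 1)`, whence `det M ≤ exp (tr M - n) ≤ 1`; dividing by
`|det G|²` bounds `det L` by `det (G Gᴴ)⁻¹`. -/

theorem prod_le_exp_sum_sub_one {ι : Type*} {s : Finset ι} {f : ι → ℝ} (hf : ∀ i ∈ s, 0 ≤ f i) :
    ∏ i ∈ s, f i ≤ Real.exp (∑ i ∈ s, (f i - 1)) := by
  rw [Real.exp_sum]
  refine Finset.prod_le_prod hf fun i _ => ?_
  simpa only [sub_add_cancel] using Real.add_one_le_exp (f i - 1)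

section RCLike

open scoped ComplexOrder

variable {𝕜 n : Type*} [RCLike 𝕜] [Fintype n]

/-- The feasible region of the origin-centered MVEE problem `Q(S)`, for real or complex scalars and
an arbitrary set `S`. Minimizing `-log det L` over it amounts to maximizing `det L`. -/
def mveeFeasible (S : Set (n → 𝕜)) : Set (Matrix n n 𝕜) :=
  {L | L.PosDef ∧ ∀ p ∈ S, star p ⬝ᵥ (L *ᵥ p) ≤ 1}

variable [DecidableEq n]

theorem det_le_exp_trace_sub_card {A : Matrix n n 𝕜} (hA : A.PosSemidef) :
    A.det ≤ (Real.exp (RCLike.re A.trace - Fintype.card n) : 𝕜) := by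
  have hdet : A.det = ((∏ i, hA.isHermitian.eigenvalues i : ℝ) : 𝕜) := by
    simpa only [RCLike.ofReal_prod] using hA.isHermitian.det_eq_prod_eigenvalues
  have htrace : RCLike.re A.trace = ∑ i, hA.isHermitian.eigenvalues i := by
    rw [hA.isHermitian.trace_eq_sum_eigenvalues, ← RCLike.ofReal_sum, RCLike.ofReal_re]
  have hbound := prod_le_exp_sum_sub_one fun i (_ : i ∈ Finset.univ) => hA.eigenvalues_nonneg i
  rw [hdet, htrace, RCLike.ofReal_le_ofReal]
  simpa only [Finset.sum_sub_distrib, Finset.sum_const, Finset.card_univ, nsmul_one] using hbound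

theorem det_le_one_of_diag_le_one {A : Matrix n n 𝕜} (hA : A.PosSemidef)
    (hdiag : ∀ i, A i i ≤ 1) : A.det ≤ 1 := by
  have htrace : RCLike.re A.trace ≤ Fintype.card n := by
    have h : A.trace ≤ ((Fintype.card n : ℝ) : 𝕜) := by
      simpa [Matrix.trace] using Finset.sum_le_sum fun i (_ : i ∈ Finset.univ) => hdiag i
    simpa only [RCLike.ofReal_re] using RCLike.re_monotone h
  calc A.det ≤ (Real.exp (RCLike.re A.trace - Fintype.card n) : 𝕜) := det_le_exp_trace_sub_card hA
    _ ≤ ((1 : ℝ) : 𝕜) := RCLike.ofReal_le_ofReal.2 (Real.exp_le_one_iff.2 (sub_nonpos.2 htrace))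
    _ = 1 := RCLike.ofReal_one

theorem posDef_mul_conjTranspose_of_isUnit {G : Matrix n n 𝕜} (hG : IsUnit G) :
    (G * Gᴴ).PosDef :=
  PosDef.mul_conjTranspose_self G (vecMul_injective_of_isUnit hG)

theorem det_le_det_inv_mul_conjTranspose {G L : Matrix n n 𝕜} (hG : IsUnit G)
    (hL : L.PosSemidef) (hcol : ∀ j, star (G.col j) ⬝ᵥ (L *ᵥ G.col j) ≤ 1) :
    L.det ≤ ((G * Gᴴ)⁻¹).det := by
  have hpos : 0 < (G * Gᴴ).det := (posDef_mul_conjTranspose_of_isUnit hG).det_pos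
  have hcongr : (Gᴴ * L * G).det ≤ 1 :=
    det_le_one_of_diag_le_one (hL.conjTranspose_mul_mul_same G) fun j =>
      (mul_mul_apply Gᴴ L G j j).trans_le (hcol j)
  have hdet : L.det * (G * Gᴴ).det ≤ 1 := by
    calc L.det * (G * Gᴴ).det = (Gᴴ * L * G).det := by simp only [det_mul]; ring
      _ ≤ 1 := hcongr
  rw [det_nonsing_inv, Ring.inverse_eq_inv', ← one_div]
  exact (le_div_iff₀ hpos).2 hdet

theorem stmt1_general {G : Matrix n n 𝕜} (hG : IsUnit G) {S : Set (n → 𝕜)}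
    (hcol : ∀ j, G.col j ∈ S) (hS : ∀ p ∈ S, star p ⬝ᵥ ((G * Gᴴ)⁻¹ *ᵥ p) ≤ 1) :
    (∀ L : Matrix n n 𝕜, L.PosSemidef → (∀ j, star (G.col j) ⬝ᵥ (L *ᵥ G.col j) ≤ 1) →
      L.det ≤ ((G * Gᴴ)⁻¹).det) ∧
    (G * Gᴴ)⁻¹ ∈ mveeFeasible S ∧ IsMaxOn det (mveeFeasible S) (G * Gᴴ)⁻¹ :=
  ⟨fun _ => det_le_det_inv_mul_conjTranspose hG,
    ⟨(posDef_mul_conjTranspose_of_isUnit hG).inv, hS⟩,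
    fun _ ⟨hL, hLS⟩ =>
      det_le_det_inv_mul_conjTranspose hG hL.posSemidef fun j => hLS _ (hcol j)⟩

end RCLike

/-- optimality of `(G Gᵀ)⁻¹` for the origin-centered MVEE problem. -/
theorem stmt1 (r : ℕ) (G : Matrix (Fin r) (Fin r) ℝ) (hG : IsUnit G)
    (S : Set (Fin r → ℝ)) (hSfin : S.Finite)
    (hSsym : ∀ x ∈ S, -x ∈ S)
    (hgS : ∀ j : Fin r, (fun i => G i j) ∈ S ∧ (-(fun i => G i j) : Fin r → ℝ) ∈ S)
    (hother : ∀ p ∈ S, p ⬝ᵥ ((G * Gᵀ)⁻¹ *ᵥ p) ≤ 1) :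
    (∀ L : Matrix (Fin r) (Fin r) ℝ, L.PosDef →
      (∀ j : Fin r, (fun i => G i j) ⬝ᵥ (L *ᵥ fun i => G i j) ≤ 1) →
      L.det ≤ ((G * Gᵀ)⁻¹).det) ∧
    ((G * Gᵀ)⁻¹).PosDef ∧
    (∀ p ∈ S, p ⬝ᵥ ((G * Gᵀ)⁻¹ *ᵥ p) ≤ 1) ∧
    (∀ L : Matrix (Fin r) (Fin r) ℝ, L.PosDef →
      (∀ p ∈ S, p ⬝ᵥ (L *ᵥ p) ≤ 1) → L.det ≤ ((G * Gᵀ)⁻¹).det) := by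
  obtain ⟨hdet, ⟨hpos, hfeas⟩, hmax⟩ := stmt1_general hG (fun j => (hgS j).1) hother
  exact ⟨fun L hL => hdet L hL.posSemidef, hpos, hfeas, fun L hL hLS => hmax ⟨hL, hLS⟩⟩
end

section
/- Let G ∈ ℝ^{r×r} with rank(G) = r, let K ∈ ℝ^{r×ℓ} be a nonnegative matrix whose columns k_1, …, k_ℓ satisfy ‖k_i‖_1 = 1, and let B = GK. For the columns g_j of G and b_i of B, let S = {±g_1, …, ±g_r, ±b_1, …, ±b_ℓ}. Then L* = (GGᵀ)⁻¹ is an optimal solution of the origin-centered MVEE problem Q(S), and the set of active points of Q(S) with respect to L* is exactly {±g_1, …, ±g_r}; moreover, b_iᵀ L* b_i = 1 holds if and only if k_i has exactly one nonzero element, in which case b_i coincides with one of the vectors g_1, …, g_r. -/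
open Matrix

/-!
The substitution `p = G x` turns `pᵀ (G Gᵀ)⁻¹ p` into `‖x‖₂²` and turns `S` into a set that
contains every `±e_j` and lies in the cross-polytope `‖x‖₁ ≤ 1`. The cross-polytope lies in the
Euclidean unit ball and touches the unit sphere only at the vertices `±e_j`, which gives
feasibility and the active points. For optimality, a feasible `L` becomes `M = Gᵀ L G` with diagonal
entries at most `1`, so `det M ≤ 1` by AM-GM applied to the eigenvalues of `M`.
-/

section RankAndQuadraticForm

theorem isUnit_of_rank_eq_card {n R : Type*} [Fintype n] [DecidableEq n] [Field R]
    {A : Matrix n n R} (hA : A.rank = Fintype.card n) : IsUnit A := by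
  rw [← linearIndependent_cols_iff_isUnit, linearIndependent_iff_card_eq_finrank_span, ← hA,
    rank_eq_finrank_span_cols, Set.finrank]

theorem mulVec_dotProduct_mulVec_mulVec {m n R : Type*} [Fintype m] [Fintype n] [CommSemiring R]
    (A : Matrix m n R) (L : Matrix m m R) (x : n → R) :
    (A *ᵥ x) ⬝ᵥ (L *ᵥ (A *ᵥ x)) = x ⬝ᵥ ((Aᵀ * L * A) *ᵥ x) := by
  rw [← mulVec_mulVec, ← mulVec_mulVec, dotProduct_mulVec x, vecMul_transpose]

variable {n R : Type*} [Fintype n] [DecidableEq n] [CommRing R] {G : Matrix n n R}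

theorem transpose_mul_inv_mul_transpose_mul (hG : IsUnit G) : Gᵀ * (G * Gᵀ)⁻¹ * G = 1 := by
  have hdet : IsUnit G.det := (isUnit_iff_isUnit_det G).1 hG
  rw [Matrix.mul_inv_rev, ← Matrix.mul_assoc, mul_nonsing_inv _ (isUnit_det_transpose G hdet),
    Matrix.one_mul, nonsing_inv_mul _ hdet]

theorem mulVec_dotProduct_inv_mul_transpose_mulVec (hG : IsUnit G) (x : n → R) :
    (G *ᵥ x) ⬝ᵥ ((G * Gᵀ)⁻¹ *ᵥ (G *ᵥ x)) = x ⬝ᵥ x := by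
  rw [mulVec_dotProduct_mulVec_mulVec, transpose_mul_inv_mul_transpose_mul hG, one_mulVec]

end RankAndQuadraticForm

section CrossPolytope

variable {n R : Type*} [Fintype n] [CommRing R] [LinearOrder R] [IsStrictOrderedRing R] {x : n → R}

theorem mul_self_le_abs_of_sum_abs_le_one (hx : ∑ a, |x a| ≤ 1) (a : n) :
    x a * x a ≤ |x a| := by
  have habs : |x a| ≤ 1 :=
    (Finset.single_le_sum (fun b _ => abs_nonneg (x b)) (Finset.mem_univ a)).trans hx
  simpa only [abs_mul_abs_self] using mul_le_of_le_one_left (abs_nonneg (x a)) habs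

theorem dotProduct_self_le_one_of_sum_abs_le_one (hx : ∑ a, |x a| ≤ 1) : x ⬝ᵥ x ≤ 1 :=
  (Finset.sum_le_sum fun a _ => mul_self_le_abs_of_sum_abs_le_one hx a).trans hx

theorem exists_abs_eq_one_of_dotProduct_self_eq_one (hx : ∑ a, |x a| ≤ 1) (hsq : x ⬝ᵥ x = 1) :
    ∃ j, |x j| = 1 := by
  have hle : ∀ a ∈ Finset.univ, x a * x a ≤ |x a| :=
    fun a _ => mul_self_le_abs_of_sum_abs_le_one hx a
  have hsum : ∑ a, x a * x a = ∑ a, |x a| :=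
    (Finset.sum_le_sum hle).antisymm (hx.trans_eq hsq.symm)
  obtain ⟨j, hj⟩ : ∃ j, x j ≠ 0 := by
    by_contra! hzero
    simp [dotProduct, hzero] at hsq
  have hterm : |x j| * |x j| = |x j| := by
    rw [abs_mul_abs_self]
    exact (Finset.sum_eq_sum_iff_of_le hle).1 hsum j (Finset.mem_univ j)
  exact ⟨j, mul_left_cancel₀ (abs_ne_zero.2 hj) (by rw [hterm, mul_one])⟩

theorem eq_zero_of_ne_of_abs_eq_one (hx : ∑ a, |x a| ≤ 1) {j b : n} (hj : |x j| = 1)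
    (hb : b ≠ j) : x b = 0 := by
  classical
  have hpair : |x b| + |x j| ≤ ∑ a, |x a| := by
    rw [← Finset.sum_pair (f := fun a => |x a|) hb]
    exact Finset.sum_le_univ_sum_of_nonneg fun a => abs_nonneg (x a)
  exact abs_nonpos_iff.1 (by linarith)

theorem dotProduct_self_eq_one_iff_existsUnique_ne_zero (hx : ∑ a, |x a| ≤ 1) :
    x ⬝ᵥ x = 1 ↔ ∑ a, |x a| = 1 ∧ ∃! a, x a ≠ 0 := by
  constructor
  · intro hsq
    obtain ⟨j, hj⟩ := exists_abs_eq_one_of_dotProduct_self_eq_one hx hsq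
    have hzero : ∀ b, b ≠ j → x b = 0 := fun b => eq_zero_of_ne_of_abs_eq_one hx hj
    refine ⟨?_, j, abs_ne_zero.1 (hj ▸ one_ne_zero), fun b => not_imp_comm.1 (hzero b)⟩
    rw [Fintype.sum_eq_single j fun b hb => by rw [hzero b hb, abs_zero], hj]
  · rintro ⟨hsum, j, -, hunique⟩
    have hzero : ∀ b, b ≠ j → x b = 0 := fun b => not_imp_comm.1 (hunique b)
    rw [Fintype.sum_eq_single j fun b hb => by rw [hzero b hb, abs_zero]] at hsum
    rw [dotProduct, Fintype.sum_eq_single j fun b hb => by rw [hzero b hb, mul_zero],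
      ← abs_mul_abs_self, hsum, one_mul]

variable [DecidableEq n]

theorem eq_single_of_abs_eq_one (hx : ∑ a, |x a| ≤ 1) {j : n} (hj : |x j| = 1) :
    x = Pi.single j (x j) :=
  Function.eq_update_iff.2 ⟨rfl, fun _ => eq_zero_of_ne_of_abs_eq_one hx hj⟩

theorem dotProduct_self_eq_one_iff_eq_single (hx : ∑ a, |x a| ≤ 1) :
    x ⬝ᵥ x = 1 ↔ ∃ j, x = Pi.single j 1 ∨ x = -Pi.single j 1 := by
  constructor
  · intro hsq
    obtain ⟨j, hj⟩ := exists_abs_eq_one_of_dotProduct_self_eq_one hx hsq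
    have hsingle := eq_single_of_abs_eq_one hx hj
    refine ⟨j, (eq_or_eq_neg_of_abs_eq hj).imp (fun h => ?_) (fun h => ?_)⟩
    · rwa [h] at hsingle
    · rwa [h, Pi.single_neg] at hsingle
  · rintro ⟨j, rfl | rfl⟩ <;> simp

theorem eq_single_one_of_nonneg_of_dotProduct_self_eq_one (hx : ∑ a, |x a| ≤ 1)
    (hnonneg : 0 ≤ x) (hsq : x ⬝ᵥ x = 1) : ∃ j, x = Pi.single j 1 := by
  obtain ⟨j, hj⟩ := exists_abs_eq_one_of_dotProduct_self_eq_one hx hsq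
  have hsingle := eq_single_of_abs_eq_one hx hj
  rw [abs_of_nonneg (hnonneg j)] at hj
  exact ⟨j, by rwa [hj] at hsingle⟩

end CrossPolytope

section Determinant

theorem prod_le_one_of_sum_le_card {n : Type*} [Fintype n] {x : n → ℝ} (hx : ∀ i, 0 ≤ x i)
    (hsum : ∑ i, x i ≤ Fintype.card n) : ∏ i, x i ≤ 1 :=
  calc ∏ i, x i ≤ ∏ i, Real.exp (x i - 1) :=
        Finset.prod_le_prod (fun i _ => hx i) fun i _ => by
          simpa using Real.add_one_le_exp (x i - 1)
    _ = Real.exp (∑ i, (x i - 1)) := (Real.exp_sum _ _).symm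
    _ ≤ 1 := by simpa [Finset.sum_sub_distrib] using hsum

open scoped ComplexOrder in
theorem det_le_one_of_posSemidef_of_diag_le_one {n 𝕜 : Type*} [Fintype n] [DecidableEq n]
    [RCLike 𝕜] {M : Matrix n n 𝕜} (hM : M.PosSemidef) (hdiag : ∀ j, M j j ≤ 1) : M.det ≤ 1 := by
  have hH := hM.isHermitian
  have htrace : ∑ i, hH.eigenvalues i ≤ Fintype.card n := by
    have h : M.trace ≤ Fintype.card n := by
      simpa [trace] using Finset.sum_le_sum fun j (_ : j ∈ Finset.univ) => hdiag j
    rw [hH.trace_eq_sum_eigenvalues] at h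
    exact_mod_cast h
  rw [hH.det_eq_prod_eigenvalues]
  exact_mod_cast prod_le_one_of_sum_le_card hM.eigenvalues_nonneg htrace

theorem det_le_det_inv_mul_transpose {n : Type*} [Fintype n] [DecidableEq n]
    {G L : Matrix n n ℝ} (hG : IsUnit G) (hL : L.PosSemidef)
    (hcol : ∀ j, G.col j ⬝ᵥ (L *ᵥ G.col j) ≤ 1) : L.det ≤ (G * Gᵀ)⁻¹.det := by
  have hpos : (Gᵀ * L * G).PosSemidef := by
    simpa only [conjTranspose_eq_transpose_of_trivial] using hL.conjTranspose_mul_mul_same G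
  have hdiag : ∀ j, (Gᵀ * L * G) j j ≤ 1 := fun j => by
    have h := hcol j
    rw [← mulVec_single_one, mulVec_dotProduct_mulVec_mulVec] at h
    simpa using h
  have hle : (Gᵀ * L * G).det ≤ (Gᵀ * (G * Gᵀ)⁻¹ * G).det := by
    rw [transpose_mul_inv_mul_transpose_mul hG, det_one]
    exact det_le_one_of_posSemidef_of_diag_le_one hpos hdiag
  have hsq : 0 < G.det * G.det := mul_self_pos.2 ((isUnit_iff_isUnit_det G).1 hG).ne_zero
  refine le_of_mul_le_mul_left ?_ hsq
  simp only [det_mul, det_transpose] at hle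
  linarith

end Determinant

section MVEE

variable {n ι : Type*} [Fintype n]

/-- Feasibility for the origin-centered MVEE problem `Q(S)`: the ellipsoid `{p | pᵀ L p ≤ 1}`
contains `S`. The set `S` is arbitrary, not necessarily finite or symmetric. -/
def IsMVEEFeasible (S : Set (n → ℝ)) (L : Matrix n n ℝ) : Prop :=
  L.PosDef ∧ ∀ p ∈ S, p ⬝ᵥ (L *ᵥ p) ≤ 1

/-- Optimality for `Q(S)`. Minimizing `-log det L` over positive definite `L` is expressed as
maximizing `det L`. -/
def IsMVEEOptimal [DecidableEq n] (S : Set (n → ℝ)) (L : Matrix n n ℝ) : Prop :=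
  IsMVEEFeasible S L ∧ ∀ L', IsMVEEFeasible S L' → L'.det ≤ L.det

/-- The active points of `Q(S)` with respect to `L`: the points of `S` on the boundary of the
ellipsoid of `L`. -/
def mveeActivePoints (S : Set (n → ℝ)) (L : Matrix n n ℝ) : Set (n → ℝ) :=
  {p ∈ S | p ⬝ᵥ (L *ᵥ p) = 1}

/-- The symmetric point set `{±a_j}` formed by the columns `a_j` of `A`. -/
def signedColumns {m : Type*} (A : Matrix m ι ℝ) : Set (m → ℝ) :=
  {p | ∃ j, p = A.col j ∨ p = -A.col j}

/-- The cross-polytope, that is, the unit ball of the 1-norm. -/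
def crossPolytope (n : Type*) [Fintype n] : Set (n → ℝ) :=
  {x | ∑ a, |x a| ≤ 1}

theorem signedColumns_mul_subset_image_crossPolytope {G : Matrix n n ℝ} {K : Matrix n ι ℝ}
    (hK : ∀ i, K.col i ∈ crossPolytope n) :
    signedColumns (G * K) ⊆ (G *ᵥ ·) '' crossPolytope n := by
  rintro p ⟨i, rfl | rfl⟩
  · exact ⟨K.col i, hK i, rfl⟩
  · exact ⟨-K.col i, by simpa [crossPolytope] using hK i, mulVec_neg _ _⟩

variable {G : Matrix n n ℝ} {S : Set (n → ℝ)}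

theorem signedColumns_subset_image_crossPolytope :
    signedColumns G ⊆ (G *ᵥ ·) '' crossPolytope n := by
  classical
  have h := signedColumns_mul_subset_image_crossPolytope (G := G) (K := (1 : Matrix n n ℝ))
    fun i => by simp [crossPolytope, one_apply, apply_ite abs]
  rwa [Matrix.mul_one] at h

variable [DecidableEq n]

theorem mem_signedColumns_mulVec_iff (hG : IsUnit G) {x : n → ℝ} (hx : x ∈ crossPolytope n) :
    G *ᵥ x ∈ signedColumns G ↔ x ⬝ᵥ x = 1 := by
  have hinj : Function.Injective G.mulVec := mulVec_injective_of_isUnit hG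
  simp only [dotProduct_self_eq_one_iff_eq_single (x := x) hx, signedColumns, Set.mem_ofPred_eq,
    ← mulVec_single_one, ← mulVec_neg, hinj.eq_iff]

theorem isMVEEOptimal_inv_mul_transpose (hG : IsUnit G) (hcols : signedColumns G ⊆ S)
    (hS : S ⊆ (G *ᵥ ·) '' crossPolytope n) : IsMVEEOptimal S (G * Gᵀ)⁻¹ := by
  refine ⟨⟨?_, fun p hp => ?_⟩, fun L hL => ?_⟩
  · simpa only [conjTranspose_eq_transpose_of_trivial] using
      (PosDef.mul_conjTranspose_self G (vecMul_injective_of_isUnit hG)).inv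
  · obtain ⟨x, hx, rfl⟩ := hS hp
    rw [mulVec_dotProduct_inv_mul_transpose_mulVec hG]
    exact dotProduct_self_le_one_of_sum_abs_le_one hx
  · exact det_le_det_inv_mul_transpose hG hL.1.posSemidef fun j =>
      hL.2 _ (hcols ⟨j, Or.inl rfl⟩)

theorem mveeActivePoints_inv_mul_transpose (hG : IsUnit G) (hcols : signedColumns G ⊆ S)
    (hS : S ⊆ (G *ᵥ ·) '' crossPolytope n) :
    mveeActivePoints S (G * Gᵀ)⁻¹ = signedColumns G := by
  have hactive : ∀ p ∈ S, p ⬝ᵥ ((G * Gᵀ)⁻¹ *ᵥ p) = 1 ↔ p ∈ signedColumns G := by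
    intro p hp
    obtain ⟨x, hx, rfl⟩ := hS hp
    rw [mulVec_dotProduct_inv_mul_transpose_mulVec hG, mem_signedColumns_mulVec_iff hG hx]
  ext p
  exact ⟨fun hp => (hactive p hp.1).1 hp.2, fun hp => ⟨hcols hp, (hactive p (hcols hp)).2 hp⟩⟩

theorem stmt2_general (hG : G.rank = Fintype.card n) {K : Matrix n ι ℝ}
    (hK : ∀ i, K.col i ∈ crossPolytope n) :
    IsMVEEOptimal (signedColumns G ∪ signedColumns (G * K)) (G * Gᵀ)⁻¹ ∧
    mveeActivePoints (signedColumns G ∪ signedColumns (G * K)) (G * Gᵀ)⁻¹ = signedColumns G ∧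
    ∀ i,
      ((G * K).col i ⬝ᵥ ((G * Gᵀ)⁻¹ *ᵥ (G * K).col i) = 1 ↔
        ∑ a, |K a i| = 1 ∧ ∃! a, K a i ≠ 0) ∧
      ((G * K).col i ⬝ᵥ ((G * Gᵀ)⁻¹ *ᵥ (G * K).col i) = 1 → (∀ a, 0 ≤ K a i) →
        ∃ j, (G * K).col i = G.col j) := by
  have hunit := isUnit_of_rank_eq_card hG
  have hS : signedColumns G ∪ signedColumns (G * K) ⊆ (G *ᵥ ·) '' crossPolytope n :=
    Set.union_subset signedColumns_subset_image_crossPolytope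
      (signedColumns_mul_subset_image_crossPolytope hK)
  refine ⟨isMVEEOptimal_inv_mul_transpose hunit Set.subset_union_left hS,
    mveeActivePoints_inv_mul_transpose hunit Set.subset_union_left hS, fun i => ?_⟩
  have hcol : (G * K).col i = G *ᵥ K.col i := rfl
  rw [hcol, mulVec_dotProduct_inv_mul_transpose_mulVec hunit]
  refine ⟨dotProduct_self_eq_one_iff_existsUnique_ne_zero (hK i), fun hsq hnonneg => ?_⟩
  obtain ⟨j, hj⟩ := eq_single_one_of_nonneg_of_dotProduct_self_eq_one (hK i) hnonneg hsq
  exact ⟨j, by rw [hj, mulVec_single_one]⟩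

end MVEE

/-- Proposition 1 of the paper — the active points of `Q(S)` with respect
to `L* = (G Gᵀ)⁻¹` are exactly `{±g_1, …, ±g_r}`. -/
theorem stmt2 (r ℓ : ℕ) (G : Matrix (Fin r) (Fin r) ℝ) (hG : G.rank = r)
    (K : Matrix (Fin r) (Fin ℓ) ℝ) (hKpos : ∀ a i, 0 ≤ K a i)
    (hK1 : ∀ i : Fin ℓ, oneNorm (fun a => K a i) = 1)
    (B : Matrix (Fin r) (Fin ℓ) ℝ) (hB : B = G * K)
    (S : Set (Fin r → ℝ))
    (hS : S = {x | (∃ j : Fin r, x = (fun i => G i j) ∨ x = -(fun i => G i j)) ∨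
                   (∃ i : Fin ℓ, x = (fun a => B a i) ∨ x = -(fun a => B a i))})
    (Lstar : Matrix (Fin r) (Fin r) ℝ) (hLstar : Lstar = (G * Gᵀ)⁻¹) :
    Lstar.PosDef ∧
    (∀ p ∈ S, p ⬝ᵥ (Lstar *ᵥ p) ≤ 1) ∧
    (∀ L : Matrix (Fin r) (Fin r) ℝ, L.PosDef →
      (∀ p ∈ S, p ⬝ᵥ (L *ᵥ p) ≤ 1) → L.det ≤ Lstar.det) ∧
    ({p ∈ S | p ⬝ᵥ (Lstar *ᵥ p) = 1} =
      {x | ∃ j : Fin r, x = (fun i => G i j) ∨ x = -(fun i => G i j)}) ∧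
    (∀ i : Fin ℓ,
      ((fun a => B a i) ⬝ᵥ (Lstar *ᵥ fun a => B a i) = 1 ↔ (∃! a : Fin r, K a i ≠ 0)) ∧
      ((fun a => B a i) ⬝ᵥ (Lstar *ᵥ fun a => B a i) = 1 →
        ∃ j : Fin r, (fun a => B a i) = fun a => G a j)) := by
  subst hB hS hLstar
  obtain ⟨⟨⟨hpos, hle⟩, hmax⟩, hactive, hcol⟩ :=
    stmt2_general (by simpa using hG) fun i => (hK1 i).le
  exact ⟨hpos, hle, fun L hL hS => hmax L ⟨hL, hS⟩, hactive, fun i =>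
    ⟨(hcol i).1.trans (and_iff_right (hK1 i)), fun h => (hcol i).2 h fun a => hKpos a i⟩⟩
end

section
/- Let A = (F, FK)Π ∈ ℝ^{d×m} be a separable matrix, where F ∈ ℝ^{d×r} has rank r, K ∈ ℝ^{r×(m−r)} is nonnegative with columns of unit 1-norm, and Π is an m×m permutation matrix. Let L = F(FᵀF)⁻²Fᵀ (which equals the Moore–Penrose pseudoinverse of FFᵀ). Then every column a_i of A satisfies a_iᵀ L a_i ≤ 1, and a_iᵀ L a_i = 1 holds if and only if a_i equals one of the columns of F. Consequently, there exists an index set 𝓘 ⊆ {1, …, m} of cardinality r such that a_iᵀ L a_i = 1 for every i ∈ 𝓘 and A(𝓘) = F, where A(𝓘) denotes the submatrix of A consisting of the columns with indices in 𝓘. -/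
open Matrix

/-!
Every column of `A` is `F w` for a vector `w` of the standard simplex. The Gram inverses in `L` make
`Fᵀ L F = 1`, so the form `xᵀ L x` pulls back along `F` to the Euclidean form `w ⬝ᵥ w`, which is at
most `1` on the standard simplex and equals `1` exactly at its vertices, that is, at the columns
of `F`.
-/

section Separable

variable {R n ι κ μ : Type*} [Fintype ι]

section StdSimplex

variable [Ring R] [PartialOrder R] [IsOrderedRing R] {w : ι → R}

theorem eq_single_of_mem_stdSimplex_of_apply_eq_one [DecidableEq ι]
    (hw : w ∈ stdSimplex R ι) {j : ι} (hj : w j = 1) : w = Pi.single j 1 := by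
  have hrest : ∑ b ∈ Finset.univ.erase j, w b = 0 := by
    rw [Finset.sum_erase_eq_sub (Finset.mem_univ j), hw.2, hj, sub_self]
  have hzero := (Finset.sum_eq_zero_iff_of_nonneg fun b _ => hw.1 b).1 hrest
  exact Function.eq_update_iff.2
    ⟨hj, fun b hb => hzero b (Finset.mem_erase.2 ⟨hb, Finset.mem_univ b⟩)⟩

theorem mul_self_le_of_mem_stdSimplex (hw : w ∈ stdSimplex R ι) (a : ι) : w a * w a ≤ w a :=
  mul_le_of_le_one_right (hw.1 a) (mem_Icc_of_mem_stdSimplex hw a).2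

theorem dotProduct_self_le_one_of_mem_stdSimplex (hw : w ∈ stdSimplex R ι) : w ⬝ᵥ w ≤ 1 :=
  hw.2 ▸ Finset.sum_le_sum fun a _ => mul_self_le_of_mem_stdSimplex hw a

theorem dotProduct_self_eq_one_iff_of_mem_stdSimplex [DecidableEq ι] [IsDomain R]
    (hw : w ∈ stdSimplex R ι) : w ⬝ᵥ w = 1 ↔ ∃ j, w = Pi.single j 1 := by
  constructor
  · intro h
    have hidem : ∀ a ∈ Finset.univ, w a * w a = w a :=
      (Finset.sum_eq_sum_iff_of_le fun a _ => mul_self_le_of_mem_stdSimplex hw a).1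
        (h.trans hw.2.symm)
    obtain ⟨j, -, hj⟩ : ∃ j ∈ Finset.univ, w j ≠ 0 :=
      Finset.exists_ne_zero_of_sum_ne_zero (hw.2.trans_ne one_ne_zero)
    exact ⟨j, eq_single_of_mem_stdSimplex_of_apply_eq_one hw <|
      (mul_eq_left₀ hj).1 (hidem j (Finset.mem_univ j))⟩
  · rintro ⟨j, rfl⟩
    rw [single_one_dotProduct, Pi.single_eq_same]

end StdSimplex

theorem exists_mem_stdSimplex_fromCols_col_eq_mulVec [Semiring R] [PartialOrder R]
    [ZeroLEOneClass R] (F : Matrix n ι R) {K : Matrix ι κ R}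
    (hK : ∀ b, K.col b ∈ stdSimplex R ι) (s : ι ⊕ κ) :
    ∃ w ∈ stdSimplex R ι, (fromCols F (F * K)).col s = F *ᵥ w := by
  classical
  rcases s with j | b
  · exact ⟨Pi.single j 1, single_mem_stdSimplex R j, (mulVec_single_one F j).symm⟩
  · exact ⟨K.col b, hK b, rfl⟩

theorem isUnit_det_transpose_mul_self_of_rank_eq_card [DecidableEq ι] [Fintype n] [Field R]
    [LinearOrder R] [IsStrictOrderedRing R] {F : Matrix n ι R} (hF : F.rank = Fintype.card ι) :
    IsUnit (Fᵀ * F).det := by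
  have hrank : (Fᵀ * F).rank = Fintype.card ι := (rank_transpose_mul_self F).trans hF
  rw [← isUnit_iff_isUnit_det, ← linearIndependent_cols_iff_isUnit,
    linearIndependent_iff_card_eq_finrank_span, ← hrank, rank_eq_finrank_span_cols, Set.finrank]

/-- The matrix `L = F(FᵀF)⁻²Fᵀ` of the quadratic form whose unit ellipsoid passes through the
columns of `F`. It is meaningful only when `FᵀF` is invertible; otherwise the matrix inverse is
`0` by convention. -/
noncomputable def ellipsoidMatrix [DecidableEq ι] [Fintype n] [CommRing R] (F : Matrix n ι R) :
    Matrix n n R :=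
  F * ((Fᵀ * F)⁻¹ * (Fᵀ * F)⁻¹) * Fᵀ

section Ellipsoid

variable [DecidableEq ι] [Fintype n] [CommRing R] {F : Matrix n ι R}

theorem transpose_mul_ellipsoidMatrix_mul_self (hF : IsUnit (Fᵀ * F).det) :
    Fᵀ * ellipsoidMatrix F * F = 1 := by
  calc Fᵀ * ellipsoidMatrix F * F
      = (Fᵀ * F * (Fᵀ * F)⁻¹) * ((Fᵀ * F)⁻¹ * (Fᵀ * F)) := by
        simp only [ellipsoidMatrix, Matrix.mul_assoc]
    _ = 1 := by rw [mul_nonsing_inv _ hF, nonsing_inv_mul _ hF, one_mul]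

theorem mulVec_dotProduct_ellipsoidMatrix_mulVec (hF : IsUnit (Fᵀ * F).det) (v w : ι → R) :
    (F *ᵥ v) ⬝ᵥ (ellipsoidMatrix F *ᵥ (F *ᵥ w)) = v ⬝ᵥ w := by
  rw [← vecMul_transpose, ← dotProduct_mulVec, mulVec_mulVec, mulVec_mulVec,
    transpose_mul_ellipsoidMatrix_mul_self hF, one_mulVec]

theorem col_dotProduct_ellipsoidMatrix_mulVec_col (hF : IsUnit (Fᵀ * F).det) (j : ι) :
    F.col j ⬝ᵥ (ellipsoidMatrix F *ᵥ F.col j) = 1 := by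
  rw [← mulVec_single_one, mulVec_dotProduct_ellipsoidMatrix_mulVec hF, single_one_dotProduct,
    Pi.single_eq_same]

variable [PartialOrder R] [IsOrderedRing R] {w : ι → R}

theorem mulVec_dotProduct_ellipsoidMatrix_le_one (hF : IsUnit (Fᵀ * F).det)
    (hw : w ∈ stdSimplex R ι) : (F *ᵥ w) ⬝ᵥ (ellipsoidMatrix F *ᵥ (F *ᵥ w)) ≤ 1 :=
  (mulVec_dotProduct_ellipsoidMatrix_mulVec hF w w).trans_le
    (dotProduct_self_le_one_of_mem_stdSimplex hw)

theorem mulVec_dotProduct_ellipsoidMatrix_eq_one_iff [IsDomain R] (hF : IsUnit (Fᵀ * F).det)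
    (hw : w ∈ stdSimplex R ι) :
    (F *ᵥ w) ⬝ᵥ (ellipsoidMatrix F *ᵥ (F *ᵥ w)) = 1 ↔ ∃ j, F *ᵥ w = F.col j := by
  constructor
  · rw [mulVec_dotProduct_ellipsoidMatrix_mulVec hF,
      dotProduct_self_eq_one_iff_of_mem_stdSimplex hw]
    rintro ⟨j, rfl⟩
    exact ⟨j, mulVec_single_one F j⟩
  · rintro ⟨j, hj⟩
    rw [hj, col_dotProduct_ellipsoidMatrix_mulVec_col hF]

end Ellipsoid

theorem stmt4_general [DecidableEq ι] [Fintype n] [Field R] [LinearOrder R] [IsStrictOrderedRing R]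
    (F : Matrix n ι R) (hF : F.rank = Fintype.card ι)
    (K : Matrix ι κ R) (hK : ∀ b, K.col b ∈ stdSimplex R ι) (π : μ ≃ ι ⊕ κ)
    (A : Matrix n μ R) (hA : A = (fromCols F (F * K)).submatrix id π) :
    (∀ i, A.col i ⬝ᵥ (ellipsoidMatrix F *ᵥ A.col i) ≤ 1) ∧
    (∀ i, A.col i ⬝ᵥ (ellipsoidMatrix F *ᵥ A.col i) = 1 ↔ ∃ j, A.col i = F.col j) ∧
    (∃ I : Finset μ, I.card = Fintype.card ι ∧
      (∀ i ∈ I, A.col i ⬝ᵥ (ellipsoidMatrix F *ᵥ A.col i) = 1) ∧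
      ∃ e : ι ↪ μ, I = Finset.univ.map e ∧ ∀ j, A.col (e j) = F.col j) := by
  have hdet := isUnit_det_transpose_mul_self_of_rank_eq_card hF
  have hcol : ∀ i, ∃ w ∈ stdSimplex R ι, A.col i = F *ᵥ w := fun i =>
    hA ▸ exists_mem_stdSimplex_fromCols_col_eq_mulVec F hK (π i)
  let e : ι ↪ μ := Function.Embedding.inl.trans π.symm.toEmbedding
  have he : ∀ j, A.col (e j) = F.col j := fun j => by
    ext c
    simp [hA, e]
  refine ⟨fun i => ?_, fun i => ?_, Finset.univ.map e, Finset.card_map e, ?_, e, rfl, he⟩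
  · obtain ⟨w, hw, hi⟩ := hcol i
    rw [hi]
    exact mulVec_dotProduct_ellipsoidMatrix_le_one hdet hw
  · obtain ⟨w, hw, hi⟩ := hcol i
    rw [hi]
    exact mulVec_dotProduct_ellipsoidMatrix_eq_one_iff hdet hw
  · refine Finset.forall_mem_map.2 fun j _ => ?_
    rw [he, col_dotProduct_ellipsoidMatrix_mulVec_col hdet]

end Separable

theorem mem_stdSimplex_of_oneNorm_eq_one {r : ℕ} {v : Fin r → ℝ} (hv : ∀ a, 0 ≤ v a)
    (hv1 : oneNorm v = 1) : v ∈ stdSimplex ℝ (Fin r) :=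
  ⟨hv, by simpa only [oneNorm, abs_of_nonneg (hv _)] using hv1⟩

/-- for a separable matrix `A = (F, FK)Π` satisfying Assumption 1 and
`L = F(FᵀF)⁻²Fᵀ`, the columns of `A` lying on the ellipsoid `xᵀLx = 1` are exactly
the columns of `F`; in particular an index set `𝓘` of cardinality `r` recovering `F`
exists. The column arrangement `(F, FK)Π` is encoded by a bijection
`π : Fin m ≃ Fin r ⊕ Fin ℓ` (where `ℓ = m - r`). -/
theorem stmt4 (d m r ℓ : ℕ)
    (F : Matrix (Fin d) (Fin r) ℝ) (hF : F.rank = r)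
    (K : Matrix (Fin r) (Fin ℓ) ℝ) (hKpos : ∀ a i, 0 ≤ K a i)
    (hK1 : ∀ i : Fin ℓ, oneNorm (fun a => K a i) = 1)
    (π : Fin m ≃ (Fin r ⊕ Fin ℓ))
    (A : Matrix (Fin d) (Fin m) ℝ)
    (hA : ∀ i j, A i j = Sum.elim (fun a => F i a) (fun b => (F * K) i b) (π j))
    (L : Matrix (Fin d) (Fin d) ℝ)
    (hL : L = F * ((Fᵀ * F)⁻¹ * (Fᵀ * F)⁻¹) * Fᵀ) :
    (∀ i : Fin m, (fun c => A c i) ⬝ᵥ (L *ᵥ fun c => A c i) ≤ 1) ∧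
    (∀ i : Fin m, (fun c => A c i) ⬝ᵥ (L *ᵥ fun c => A c i) = 1 ↔
      ∃ j : Fin r, (fun c => A c i) = fun c => F c j) ∧
    (∃ I : Finset (Fin m), I.card = r ∧
      (∀ i ∈ I, (fun c => A c i) ⬝ᵥ (L *ᵥ fun c => A c i) = 1) ∧
      ∃ e : Fin r ↪ Fin m, I = Finset.univ.map e ∧
        ∀ j : Fin r, (fun c => A c (e j)) = fun c => F c j) := by
  subst hL
  have h := stmt4_general F (hF.trans (Fintype.card_fin r).symm) K
    (fun b => mem_stdSimplex_of_oneNorm_eq_one (hKpos · b) (hK1 b)) π A (Matrix.ext hA)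
  rwa [Fintype.card_fin] at h
end

section
/- Let A = (F, FK)Π ∈ ℝ^{d×m}, where F ∈ ℝ^{d×r} has rank r, K ∈ ℝ^{r×ℓ} (ℓ = m − r) is nonnegative with columns k_1, …, k_ℓ of unit 1-norm, and Π is an m×m permutation matrix. Let N ∈ ℝ^{d×m}, Ã = A + N, and let Ã^r be a best rank-r approximation of Ã in the spectral norm. Set N̄ = N − (Ã − Ã^r), write N̄Π⁻¹ = (N̄⁽¹⁾, N̄⁽²⁾) with N̄⁽¹⁾ ∈ ℝ^{d×r} and N̄⁽²⁾ ∈ ℝ^{d×ℓ}, and set N̂ = −N̄⁽¹⁾K + N̄⁽²⁾. Let μ = max_{i=1,…,ℓ} ‖k_i‖_2. Then every column n̂_i of N̂ satisfies ‖n̂_i‖_2 ≤ 2‖N‖_2 (μ + 1). -/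
open Matrix

/-!
Since `A = F(I, K)Π` has rank at most `r`, it competes with the best rank-`r` approximation `Ãʳ`
of `Ã = A + N`, so `‖Ã - Ãʳ‖ ≤ ‖Ã - A‖ = ‖N‖` and hence `‖N̄‖ ≤ 2‖N‖`. The `i`-th column of `N̂`
is the image of the stacked vector `(-kᵢ, eᵢ)` under `N̄Π⁻¹`; that vector has norm at most
`‖kᵢ‖ + 1`, and `N̄Π⁻¹` has the same spectral norm as `N̄`.
-/

section SumElim

variable {ι κ E : Type*} [Fintype ι] [Fintype κ] [SeminormedAddCommGroup E]
  (p : ENNReal) [Fact (1 ≤ p)]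

theorem norm_toLp_sumElim_zero_right (v : ι → E) :
    ‖WithLp.toLp p (Sum.elim v (0 : κ → E))‖ = ‖WithLp.toLp p v‖ := by
  rw [← (PiLp.sumPiLpEquivProdLpPiLp (𝕜 := ℤ) p fun _ : ι ⊕ κ ↦ E).norm_map]
  exact WithLp.norm_toLp_fst p (PiLp p fun _ : ι ↦ E) (PiLp p fun _ : κ ↦ E) (WithLp.toLp p v)

theorem norm_toLp_sumElim_zero_left (w : κ → E) :
    ‖WithLp.toLp p (Sum.elim (0 : ι → E) w)‖ = ‖WithLp.toLp p w‖ := by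
  rw [← (PiLp.sumPiLpEquivProdLpPiLp (𝕜 := ℤ) p fun _ : ι ⊕ κ ↦ E).norm_map]
  exact WithLp.norm_toLp_snd p (PiLp p fun _ : ι ↦ E) (PiLp p fun _ : κ ↦ E) (WithLp.toLp p w)

theorem norm_toLp_sumElim_le (v : ι → E) (w : κ → E) :
    ‖WithLp.toLp p (Sum.elim v w)‖ ≤ ‖WithLp.toLp p v‖ + ‖WithLp.toLp p w‖ := by
  have split : Sum.elim v w = Sum.elim v (0 : κ → E) + Sum.elim (0 : ι → E) w := by
    rw [← Sum.elim_add_add, add_zero, zero_add]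
  rw [split, WithLp.toLp_add, ← norm_toLp_sumElim_zero_right (κ := κ) p v,
    ← norm_toLp_sumElim_zero_left (ι := ι) p w]
  exact norm_add_le _ _

end SumElim

section Blocks

variable {R d r l : Type*} [Fintype r]

theorem rank_fromCols_mul_le [CommSemiring R] [StrongRankCondition R] [Fintype l]
    (F : Matrix d r R) (K : Matrix r l R) : (fromCols F (F * K)).rank ≤ F.rank := by
  classical
  have factor : fromCols F (F * K) = F * fromCols 1 K := by rw [mul_fromCols, Matrix.mul_one]
  exact factor ▸ rank_mul_le_left F _

theorem col_neg_mul_add [Ring R] [Fintype l] [DecidableEq l]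
    (M₁ : Matrix d r R) (M₂ : Matrix d l R) (K : Matrix r l R) (i : l) :
    (-(M₁ * K) + M₂).col i = fromCols M₁ M₂ *ᵥ Sum.elim (-K.col i) (Pi.single i 1) := by
  rw [fromCols_mulVec_sumElim, mulVec_neg, mulVec_single_one]
  rfl

end Blocks

section SpectralNorm

open scoped Matrix.Norms.L2Operator

theorem euclNorm_eq_norm_toLp {n : ℕ} (v : Fin n → ℝ) : euclNorm v = ‖WithLp.toLp 2 v‖ := by
  simp only [euclNorm, EuclideanSpace.norm_eq, Real.norm_eq_abs, sq_abs]

theorem specNorm_eq_l2_opNorm {d m : ℕ} (M : Matrix (Fin d) (Fin m) ℝ) : specNorm M = ‖M‖ :=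
  rfl

variable {𝕜 d m m' r l : Type*} [RCLike 𝕜] [Fintype d] [Fintype m] [DecidableEq m]
  [Fintype m'] [DecidableEq m'] [Fintype r]

theorem l2_opNorm_submatrix_id_equiv (M : Matrix d m 𝕜) (e : m' ≃ m) :
    ‖M.submatrix id e‖ = ‖M‖ := by
  rw [l2_opNorm_def, l2_opNorm_def, ← ContinuousLinearMap.opNorm_comp_linearIsometryEquiv _
    (LinearIsometryEquiv.piLpCongrLeft 2 𝕜 𝕜 e)]
  congr 1
  ext x : 1
  exact congrArg (WithLp.toLp 2) (submatrix_mulVec_equiv M x.ofLp id e)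

theorem norm_col_neg_mul_add_le [DecidableEq r] [Fintype l] [DecidableEq l]
    (M₁ : Matrix d r 𝕜) (M₂ : Matrix d l 𝕜) (K : Matrix r l 𝕜) (i : l) :
    ‖WithLp.toLp 2 ((-(M₁ * K) + M₂).col i)‖ ≤
      ‖fromCols M₁ M₂‖ * (‖WithLp.toLp 2 (K.col i)‖ + 1) := by
  have stacked_le : ‖WithLp.toLp 2 (Sum.elim (-K.col i) (Pi.single i (1 : 𝕜)))‖ ≤
      ‖WithLp.toLp 2 (K.col i)‖ + 1 := by
    simpa using norm_toLp_sumElim_le 2 (-K.col i) (Pi.single i (1 : 𝕜))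
  rw [col_neg_mul_add]
  exact (l2_opNorm_mulVec _ (WithLp.toLp 2 _)).trans
    (mul_le_mul_of_nonneg_left stacked_le (norm_nonneg _))

/-- `B` is a best rank-`k` approximation of `M` in the spectral norm, as `Ãʳ` is of `Ã`. The
spectral norm is the `L2` operator norm, and rank `k` stands for rank at most `k`. -/
structure IsBestRankApprox (k : ℕ) (M B : Matrix d m 𝕜) : Prop where
  rank_le : B.rank ≤ k
  norm_sub_le_of_rank_le : ∀ C : Matrix d m 𝕜, C.rank ≤ k → ‖M - B‖ ≤ ‖M - C‖

theorem IsBestRankApprox.norm_sub_residual_le {k : ℕ} {A N B : Matrix d m 𝕜}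
    (hB : IsBestRankApprox k (A + N) B) (hA : A.rank ≤ k) :
    ‖N - (A + N - B)‖ ≤ 2 * ‖N‖ := by
  have residual_le : ‖A + N - B‖ ≤ ‖N‖ := by simpa using hB.norm_sub_le_of_rank_le A hA
  calc ‖N - (A + N - B)‖ ≤ ‖N‖ + ‖A + N - B‖ := norm_sub_le _ _
    _ ≤ 2 * ‖N‖ := by linarith

theorem stmt6_general {k : ℕ} {F : Matrix d r 𝕜} (hF : F.rank ≤ k) {K : Matrix r l 𝕜}
    {π : m ≃ r ⊕ l} {A N B : Matrix d m 𝕜}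
    (hA : A = (fromCols F (F * K)).submatrix id π)
    (hB : IsBestRankApprox k (A + N) B) {N₁ : Matrix d r 𝕜} {N₂ : Matrix d l 𝕜}
    (hN : (N - (A + N - B)).submatrix id π.symm = fromCols N₁ N₂) (i : l) :
    ‖WithLp.toLp 2 ((-(N₁ * K) + N₂).col i)‖ ≤
      2 * ‖N‖ * ((⨆ j, ‖WithLp.toLp 2 (K.col j)‖) + 1) := by
  classical
  have : Finite l := .of_injective (π.symm ∘ Sum.inr) (π.symm.injective.comp Sum.inr_injective)
  cases nonempty_fintype l
  have rank_A_le : A.rank ≤ k :=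
    hA ▸ (rank_submatrix_le _ _ _).trans ((rank_fromCols_mul_le F K).trans hF)
  have blocks_le : ‖fromCols N₁ N₂‖ ≤ 2 * ‖N‖ := by
    rw [← hN, l2_opNorm_submatrix_id_equiv]
    exact hB.norm_sub_residual_le rank_A_le
  have col_le_iSup : ‖WithLp.toLp 2 (K.col i)‖ ≤ ⨆ j, ‖WithLp.toLp 2 (K.col j)‖ :=
    le_ciSup (f := fun j ↦ ‖WithLp.toLp 2 (K.col j)‖) (Set.finite_range _).bddAbove i
  exact (norm_col_neg_mul_add_le N₁ N₂ K i).trans (by gcongr)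

end SpectralNorm

/-- Lemma 2-b of the paper — the columns `n̂_i` of
`N̂ = −N̄⁽¹⁾K + N̄⁽²⁾` satisfy `‖n̂_i‖₂ ≤ 2‖N‖₂(μ + 1)` where `μ = max_i ‖k_i‖₂`.
The column arrangement `(F, FK)Π` is encoded by a bijection `π : Fin m ≃ Fin r ⊕ Fin ℓ`. -/
theorem stmt6 (d m r ℓ : ℕ)
    (F : Matrix (Fin d) (Fin r) ℝ) (hF : F.rank = r)
    (K : Matrix (Fin r) (Fin ℓ) ℝ) (hKpos : ∀ a i, 0 ≤ K a i)
    (hK1 : ∀ i : Fin ℓ, oneNorm (fun a => K a i) = 1)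
    (π : Fin m ≃ (Fin r ⊕ Fin ℓ))
    (A : Matrix (Fin d) (Fin m) ℝ)
    (hA : ∀ i j, A i j = Sum.elim (fun a => F i a) (fun b => (F * K) i b) (π j))
    (N : Matrix (Fin d) (Fin m) ℝ)
    (Ar : Matrix (Fin d) (Fin m) ℝ) (hAr_rank : Ar.rank ≤ r)
    (hAr_best : ∀ B : Matrix (Fin d) (Fin m) ℝ, B.rank ≤ r →
      specNorm (A + N - Ar) ≤ specNorm (A + N - B))
    (Nbar : Matrix (Fin d) (Fin m) ℝ) (hNbar : Nbar = N - (A + N - Ar))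
    (N1 : Matrix (Fin d) (Fin r) ℝ) (hN1 : ∀ i a, N1 i a = Nbar i (π.symm (Sum.inl a)))
    (N2 : Matrix (Fin d) (Fin ℓ) ℝ) (hN2 : ∀ i b, N2 i b = Nbar i (π.symm (Sum.inr b)))
    (Nhat : Matrix (Fin d) (Fin ℓ) ℝ) (hNhat : Nhat = -(N1 * K) + N2)
    (μ : ℝ) (hμ : μ = ⨆ i : Fin ℓ, euclNorm (fun a => K a i)) :
    ∀ i : Fin ℓ, euclNorm (fun c => Nhat c i) ≤ 2 * specNorm N * (μ + 1) := by
  intro i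
  have A_eq : A = (fromCols F (F * K)).submatrix id π := by
    ext c j
    rw [hA, submatrix_apply]
    cases π j <;> rfl
  have blocks_eq : Nbar.submatrix id π.symm = fromCols N1 N2 := by
    ext c (a | b)
    exacts [(hN1 c a).symm, (hN2 c b).symm]
  subst hNbar hNhat hμ
  simp only [euclNorm_eq_norm_toLp, specNorm_eq_l2_opNorm] at hAr_best ⊢
  exact stmt6_general hF.le A_eq ⟨hAr_rank, hAr_best⟩ blocks_eq i
end

section
/- Let A = (F, FK)Π ∈ ℝ^{d×m}, where F ∈ ℝ^{d×r} has rank r, K ∈ ℝ^{r×ℓ} (ℓ = m − r) is nonnegative with columns k_1, …, k_ℓ of unit 1-norm, and Π is an m×m permutation matrix. Let N ∈ ℝ^{d×m}, Ã = A + N, let Ã^r be a best rank-r approximation of Ã in the spectral norm, set N̄ = N − (Ã − Ã^r), write N̄Π⁻¹ = (N̄⁽¹⁾, N̄⁽²⁾) with N̄⁽¹⁾ ∈ ℝ^{d×r}, and set F̂ = F + N̄⁽¹⁾, N̂ = −N̄⁽¹⁾K + N̄⁽²⁾, and B̂ = F̂K + N̂. Let σ = σ_min(F) and μ = max_i ‖k_i‖_2.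 If ‖N‖_2 < σ(1 − μ)/4, then for every column b̂_i of B̂ there exists a vector k̂_i ∈ ℝ^r with ‖k̂_i‖_2 < 1 such that b̂_i = F̂ k̂_i. -/
open Matrix

/-! Write `B = A + N̄` for the rank-`r` approximation. Since `A` has rank at most `r`, optimality
gives `‖N̄‖ ≤ 2‖N‖ =: δ < σ(1 - μ)/2`. In particular `δ < σ`, so the `r` columns `F̂ = F + N̄⁽¹⁾`
of `B` stay linearly independent and, as `rank B ≤ r`, they span every other column: `b̂ = F̂ k̂`.
Comparing with `b̂ = F k + n` for a column `n` of `N̄⁽²⁾` gives `F (k̂ - k) = n - N̄⁽¹⁾ k̂`, hence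
`σ(‖k̂‖ - ‖k‖) ≤ δ(1 + ‖k̂‖)`, which is incompatible with `‖k̂‖ ≥ 1`. -/

section PerturbedLinearMap

theorem norm_lt_one_of_map_add_eq_map_add {E G H : Type*} [SeminormedAddCommGroup E]
    [SeminormedAddCommGroup G] [FunLike H E G] [AddMonoidHomClass H E G] {f : H} {σ δ : ℝ} {x y : E}
    {u v : G} (hσ : 0 ≤ σ) (hf : σ * ‖x - y‖ ≤ ‖f (x - y)‖) (hu : ‖u‖ ≤ δ * ‖x‖) (hv : ‖v‖ ≤ δ)
    (hδ : 2 * δ < σ * (1 - ‖y‖)) (h : f x + u = f y + v) : ‖x‖ < 1 := by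
  have hdiff : f (x - y) = v - u := by
    rw [map_sub, sub_eq_sub_iff_add_eq_add, h, add_comm]
  have hbound : σ * (‖x‖ - ‖y‖) ≤ δ * (1 + ‖x‖) := calc
    σ * (‖x‖ - ‖y‖) ≤ σ * ‖x - y‖ := by gcongr; exact norm_sub_norm_le x y
    _ ≤ ‖v - u‖ := hdiff ▸ hf
    _ ≤ ‖v‖ + ‖u‖ := norm_sub_le v u
    _ ≤ δ * (1 + ‖x‖) := by linarith
  have hδσ : 0 < σ - δ := by
    have : 0 ≤ σ * ‖y‖ := by positivity
    linarith [(norm_nonneg v).trans hv]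
  have : (σ - δ) * ‖x‖ < (σ - δ) * 1 := by linarith
  exact lt_of_mul_lt_mul_left this hδσ.le

theorem injective_of_norm_sub_le_of_mul_norm_le {E G H : Type*} [NormedAddCommGroup E]
    [SeminormedAddCommGroup G] [FunLike H E G] [AddMonoidHomClass H E G] {f g : H} {σ δ : ℝ}
    (hf : ∀ x, σ * ‖x‖ ≤ ‖f x‖) (hfg : ∀ x, ‖g x - f x‖ ≤ δ * ‖x‖) (hδ : δ < σ) :
    Function.Injective g := by
  refine (injective_iff_map_eq_zero g).2 fun x hx => ?_
  have hle : σ * ‖x‖ ≤ δ * ‖x‖ := (hf x).trans (by simpa [hx] using hfg x)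
  by_contra hne
  exact hδ.not_ge (le_of_mul_le_mul_right hle (norm_pos_iff.2 hne))

end PerturbedLinearMap

section Rank

theorem exists_submatrix_mulVec_eq_col_of_rank_le {R d r n : Type*} [Field R] [Finite d] [Fintype r]
    [Fintype n] {M : Matrix d n R} {e : r → n} (hM : M.rank ≤ Fintype.card r)
    (he : Function.Injective (M.submatrix id e).mulVecLin) (j : n) :
    ∃ x, M.submatrix id e *ᵥ x = M.col j := by
  have hle : (M.submatrix id e).mulVecLin.range ≤ M.mulVecLin.range := by
    rw [range_mulVecLin, range_mulVecLin]
    exact Submodule.span_mono (Set.range_subset_iff.2 fun a => ⟨e a, rfl⟩)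
  have heq : (M.submatrix id e).mulVecLin.range = M.mulVecLin.range := by
    refine Submodule.eq_of_le_of_finrank_le hle ?_
    rwa [LinearMap.finrank_range_of_inj he, Module.finrank_fintype_fun_eq_card]
  have hj : M.col j ∈ M.mulVecLin.range := by
    rw [range_mulVecLin]
    exact Submodule.subset_span ⟨j, rfl⟩
  rwa [← heq] at hj

theorem rank_le_rank_of_eq_sumElim_mul {R d m r ℓ : Type*} [CommRing R] [StrongRankCondition R]
    [Fintype m] [Fintype r] {F : Matrix d r R} {K : Matrix r ℓ R} {π : m → r ⊕ ℓ} {A : Matrix d m R}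
    (hA : ∀ i j, A i j = Sum.elim (fun a => F i a) (fun b => (F * K) i b) (π j)) :
    A.rank ≤ F.rank := by
  classical
  have hfactor : A = F * (fromCols 1 K).submatrix id π := by
    ext i j
    rcases hj : π j with a | b <;> simp [hA, hj, mul_apply, one_apply]
  rw [hfactor]
  exact rank_mul_le_left _ _

end Rank

section L2OpNorm

open scoped Matrix.Norms.L2Operator

variable {𝕜 d r n : Type*} [RCLike 𝕜] [Fintype d] [Fintype r] [Fintype n]

theorem norm_toLp_mulVec_le [DecidableEq n] (M : Matrix d n 𝕜) (x : n → 𝕜) :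
    ‖WithLp.toLp 2 (M *ᵥ x)‖ ≤ ‖M‖ * ‖WithLp.toLp 2 x‖ :=
  l2_opNorm_mulVec M (WithLp.toLp 2 x)

theorem norm_toLp_col_le [DecidableEq n] (M : Matrix d n 𝕜) (j : n) :
    ‖WithLp.toLp 2 (M.col j)‖ ≤ ‖M‖ := by
  simpa using norm_toLp_mulVec_le M (Pi.single j 1)

theorem norm_toLp_col_le_iSup {ℓ : Type*} [Finite ℓ] (K : Matrix r ℓ 𝕜) (i : ℓ) :
    ‖WithLp.toLp 2 (K.col i)‖ ≤ ⨆ i, ‖WithLp.toLp 2 (K.col i)‖ :=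
  le_ciSup (f := fun i => ‖WithLp.toLp 2 (K.col i)‖) (Set.finite_range _).bddAbove i

theorem norm_one_submatrix_le [DecidableEq r] [DecidableEq n] {e : r → n}
    (he : Function.Injective e) :
    ‖(1 : Matrix n n 𝕜).submatrix id e‖ ≤ 1 := by
  have hone : ‖(1 : Matrix r r 𝕜)‖ ≤ 1 := by
    rw [← diagonal_one, l2_opNorm_diagonal]
    exact (pi_norm_const_le (1 : 𝕜)).trans norm_one.le
  have hadj : ((1 : Matrix n n 𝕜).submatrix id e)ᴴ * (1 : Matrix n n 𝕜).submatrix id e = 1 := by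
    rw [conjTranspose_submatrix, conjTranspose_one, ← submatrix_mul _ _ _ _ _ Function.bijective_id,
      one_mul, submatrix_one e he]
  rw [← hadj, l2_opNorm_conjTranspose_mul_self, ← sq] at hone
  exact (sq_le_one_iff₀ (norm_nonneg _)).1 hone

theorem norm_submatrix_id_le [DecidableEq r] [DecidableEq n] (M : Matrix d n 𝕜)
    {e : r → n} (he : Function.Injective e) : ‖M.submatrix id e‖ ≤ ‖M‖ := calc
  ‖M.submatrix id e‖ = ‖M * (1 : Matrix n n 𝕜).submatrix id e‖ := by
    congr 1
    simpa using submatrix_mul M 1 id id e Function.bijective_id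
  _ ≤ ‖M‖ * ‖(1 : Matrix n n 𝕜).submatrix id e‖ := l2_opNorm_mul _ _
  _ ≤ ‖M‖ := mul_le_of_le_one_right (norm_nonneg M) (norm_one_submatrix_le he)

theorem exists_norm_lt_one_submatrix_mulVec_eq_col [DecidableEq r] {M : Matrix d n 𝕜}
    {e : r → n} (hM : M.rank ≤ Fintype.card r) {F : Matrix d r 𝕜} {k : r → 𝕜} {j : n}
    {σ δ : ℝ} (hσ : 0 ≤ σ) (hF : ∀ x, σ * ‖WithLp.toLp 2 x‖ ≤ ‖WithLp.toLp 2 (F *ᵥ x)‖)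
    (hMF : ‖M.submatrix id e - F‖ ≤ δ) (hMk : ‖WithLp.toLp 2 (M.col j - F *ᵥ k)‖ ≤ δ)
    (hδ : 2 * δ < σ * (1 - ‖WithLp.toLp 2 k‖)) :
    ∃ x, ‖WithLp.toLp 2 x‖ < 1 ∧ M.col j = M.submatrix id e *ᵥ x := by
  have hperturb : ∀ x, ‖WithLp.toLp 2 ((M.submatrix id e - F) *ᵥ x)‖ ≤ δ * ‖WithLp.toLp 2 x‖ :=
    fun x => (norm_toLp_mulVec_le _ x).trans (by gcongr)
  have hδσ : δ < σ := by
    have : 0 ≤ σ * ‖WithLp.toLp 2 k‖ := by positivity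
    linarith [(norm_nonneg _).trans hMF]
  have hinj : Function.Injective (toEuclideanLin (M.submatrix id e)) :=
    injective_of_norm_sub_le_of_mul_norm_le (f := toEuclideanLin F) (fun x => hF x.ofLp)
      (fun x => by simpa [sub_mulVec, toLpLin_apply] using hperturb x.ofLp) hδσ
  obtain ⟨x, hx⟩ := exists_submatrix_mulVec_eq_col_of_rank_le hM
    (fun y z h => WithLp.toLp_injective 2 (hinj (congrArg (WithLp.toLp 2) h))) j
  refine ⟨x, norm_lt_one_of_map_add_eq_map_add (f := toEuclideanLin F) hσ (hF _) (hperturb x) hMk hδ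
    ?_, hx.symm⟩
  simp [toLpLin_apply, sub_mulVec, hx]

theorem stmt9_general {m ℓ : Type*} [Fintype m] [DecidableEq m]
    (F : Matrix d r 𝕜) (K : Matrix r ℓ 𝕜) (π : m ≃ r ⊕ ℓ)
    (A : Matrix d m 𝕜)
    (hA : ∀ i j, A i j = Sum.elim (fun a => F i a) (fun b => (F * K) i b) (π j))
    (N Ar : Matrix d m 𝕜) (hAr_rank : Ar.rank ≤ Fintype.card r) (hAr : ‖A + N - Ar‖ ≤ ‖N‖)
    (Nbar : Matrix d m 𝕜) (hNbar : Nbar = N - (A + N - Ar))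
    (N1 : Matrix d r 𝕜) (hN1 : ∀ i a, N1 i a = Nbar i (π.symm (Sum.inl a)))
    (N2 : Matrix d ℓ 𝕜) (hN2 : ∀ i b, N2 i b = Nbar i (π.symm (Sum.inr b)))
    {σ μ : ℝ} (hσ : 0 ≤ σ) (hF : ∀ x, σ * ‖WithLp.toLp 2 x‖ ≤ ‖WithLp.toLp 2 (F *ᵥ x)‖)
    (i : ℓ) (hμ : ‖WithLp.toLp 2 (K.col i)‖ ≤ μ) (hN : ‖N‖ < σ * (1 - μ) / 4) :
    ∃ khat : r → 𝕜, ‖WithLp.toLp 2 khat‖ < 1 ∧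
      ((F + N1) * K + (-(N1 * K) + N2)).col i = (F + N1) *ᵥ khat := by
  classical
  have hNbar_le : ‖Nbar‖ ≤ 2 * ‖N‖ := by
    linarith [hNbar ▸ norm_sub_le N (A + N - Ar)]
  have hδ : 2 * (2 * ‖N‖) < σ * (1 - ‖WithLp.toLp 2 (K.col i)‖) := calc
    2 * (2 * ‖N‖) < σ * (1 - μ) := by linarith
    _ ≤ σ * (1 - ‖WithLp.toLp 2 (K.col i)‖) := by gcongr
  have hAr_eq : Ar = A + Nbar := by rw [hNbar]; abel
  have hFhat : F + N1 = Ar.submatrix id (π.symm ∘ Sum.inl) := by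
    ext c a
    simp [hAr_eq, hA, hN1]
  have hBhat : ((F + N1) * K + (-(N1 * K) + N2)).col i = Ar.col (π.symm (Sum.inr i)) := by
    ext c
    simp [hAr_eq, hA, hN2, Matrix.add_mul]
  have hN1_eq : Ar.submatrix id (π.symm ∘ Sum.inl) - F = Nbar.submatrix id (π.symm ∘ Sum.inl) := by
    ext c a
    simp [hAr_eq, hA]
  have hN2_eq : Ar.col (π.symm (Sum.inr i)) - F *ᵥ K.col i = Nbar.col (π.symm (Sum.inr i)) := by
    ext c
    simp [hAr_eq, hA, Matrix.mul_apply, mulVec, dotProduct]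
  rw [hBhat, hFhat]
  exact exists_norm_lt_one_submatrix_mulVec_eq_col hAr_rank (k := K.col i) hσ hF
    (hN1_eq ▸ (norm_submatrix_id_le Nbar (π.symm.injective.comp Sum.inl_injective)).trans hNbar_le)
    (hN2_eq ▸ (norm_toLp_col_le Nbar _).trans hNbar_le) hδ

end L2OpNorm

section EuclideanBridge

open scoped Matrix.Norms.L2Operator

theorem bddBelow_image_euclNorm_mulVec {d r : ℕ} (M : Matrix (Fin d) (Fin r) ℝ)
    (s : Set (Fin r → ℝ)) : BddBelow ((fun x => euclNorm (M *ᵥ x)) '' s) :=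
  ⟨0, Set.forall_mem_image.2 fun _ _ => Real.sqrt_nonneg _⟩

theorem sigmaMin_nonneg {d r : ℕ} (M : Matrix (Fin d) (Fin r) ℝ) : 0 ≤ sigmaMin M :=
  Real.sInf_nonneg (Set.forall_mem_image.2 fun _ _ => Real.sqrt_nonneg _)

theorem sigmaMin_mul_norm_toLp_le {d r : ℕ} (M : Matrix (Fin d) (Fin r) ℝ) (x : Fin r → ℝ) :
    sigmaMin M * ‖WithLp.toLp 2 x‖ ≤ ‖WithLp.toLp 2 (M *ᵥ x)‖ := by
  rcases eq_or_ne x 0 with rfl | hx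
  · simp
  have hpos : 0 < ‖WithLp.toLp 2 x‖ := norm_pos_iff.2 (by simpa using hx)
  have hunit : euclNorm (‖WithLp.toLp 2 x‖⁻¹ • x) = 1 := by
    rw [euclNorm_eq_norm_toLp, WithLp.toLp_smul, norm_smul, norm_inv, norm_norm,
      inv_mul_cancel₀ hpos.ne']
  have hle : sigmaMin M ≤ euclNorm (M *ᵥ (‖WithLp.toLp 2 x‖⁻¹ • x)) :=
    csInf_le (bddBelow_image_euclNorm_mulVec M _) ⟨_, hunit, rfl⟩
  rwa [mulVec_smul, euclNorm_eq_norm_toLp, WithLp.toLp_smul, norm_smul, norm_inv, norm_norm,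
    ← div_eq_inv_mul, le_div_iff₀ hpos] at hle

end EuclideanBridge

/-- Lemma 3-b of the paper — if `‖N‖₂ < σ(1 − μ)/4` then every column
`b̂_i` of `B̂ = F̂K + N̂` can be written `b̂_i = F̂ k̂_i` with `‖k̂_i‖₂ < 1`. -/
theorem stmt9 (d m r ℓ : ℕ)
    (F : Matrix (Fin d) (Fin r) ℝ) (hF : F.rank = r)
    (K : Matrix (Fin r) (Fin ℓ) ℝ) (hKpos : ∀ a i, 0 ≤ K a i)
    (hK1 : ∀ i : Fin ℓ, oneNorm (fun a => K a i) = 1)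
    (π : Fin m ≃ (Fin r ⊕ Fin ℓ))
    (A : Matrix (Fin d) (Fin m) ℝ)
    (hA : ∀ i j, A i j = Sum.elim (fun a => F i a) (fun b => (F * K) i b) (π j))
    (N : Matrix (Fin d) (Fin m) ℝ)
    (Ar : Matrix (Fin d) (Fin m) ℝ) (hAr_rank : Ar.rank ≤ r)
    (hAr_best : ∀ B : Matrix (Fin d) (Fin m) ℝ, B.rank ≤ r →
      specNorm (A + N - Ar) ≤ specNorm (A + N - B))
    (Nbar : Matrix (Fin d) (Fin m) ℝ) (hNbar : Nbar = N - (A + N - Ar))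
    (N1 : Matrix (Fin d) (Fin r) ℝ) (hN1 : ∀ i a, N1 i a = Nbar i (π.symm (Sum.inl a)))
    (N2 : Matrix (Fin d) (Fin ℓ) ℝ) (hN2 : ∀ i b, N2 i b = Nbar i (π.symm (Sum.inr b)))
    (Nhat : Matrix (Fin d) (Fin ℓ) ℝ) (hNhat : Nhat = -(N1 * K) + N2)
    (Fhat : Matrix (Fin d) (Fin r) ℝ) (hFhat : Fhat = F + N1)
    (Bhat : Matrix (Fin d) (Fin ℓ) ℝ) (hBhat : Bhat = Fhat * K + Nhat)
    (σ μ : ℝ) (hσ : σ = sigmaMin F) (hμ : μ = ⨆ i : Fin ℓ, euclNorm (fun a => K a i))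
    (hN : specNorm N < σ * (1 - μ) / 4) :
    ∀ i : Fin ℓ, ∃ khat : Fin r → ℝ, euclNorm khat < 1 ∧
      (fun c => Bhat c i) = Fhat *ᵥ khat := by
  subst hNhat hFhat hBhat hσ hμ
  simp only [specNorm_eq_l2_opNorm, euclNorm_eq_norm_toLp] at hAr_best hN ⊢
  exact fun i => stmt9_general F K π A hA N Ar (by simpa using hAr_rank)
    (by simpa using hAr_best A ((rank_le_rank_of_eq_sumElim_mul hA).trans hF.le)) Nbar hNbar
    N1 hN1 N2 hN2 (sigmaMin_nonneg F) (sigmaMin_mul_norm_toLp_le F) i (norm_toLp_col_le_iSup K i) hN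
end
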